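/- arXiv:1410.1201 — 2 statements merged into one kernel-verified Lean document; each statement's English description precedes it below -/
import Mathlib

section
/- Let N ≥ 2 be an integer, κ ∈ (0, 1/4], α₊ = 1 + √(1−4κ), and let j be an index with 1 ≤ j ≤ N−1. Then the function u(x) = x_N^{α₊/2} x_j |x|^{−(N+α₊)} satisfies −Δu(x) − κ x_N^{−2} u(x) = 0 for every x ∈ H \ {0}, where H = {x ∈ ℝ^N : x_N > 0}. (This is the singular, homogeneous-of-degree −(N − 1 + α₊/2), companion of the second spherical eigenfunctions ρ_{κ,j}(σ) = (e_N·σ)^{α₊/2}(e_j·σ).) -/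
open Real MeasureTheory

/-- The Euclidean Laplacian of `u : ℝ^N → ℝ`, written as the sum of the second
partial derivatives in the coordinate directions. -/
noncomputable def lap {N : ℕ} (u : EuclideanSpace ℝ (Fin N) → ℝ)
    (x : EuclideanSpace ℝ (Fin N)) : ℝ :=
  ∑ i : Fin N,
    fderiv ℝ (fun y => fderiv ℝ u y (EuclideanSpace.single i 1)) x (EuclideanSpace.single i 1)

/-!
The factor `f(x) = x_N^{α/2} x_j` satisfies `-Δf = κ x_N⁻² f`, because `α/2 · (1 - α/2) = κ` and the
directions `e_N`, `e_j` are orthogonal. It is homogeneous of degree `m = α/2 + 1`, so Euler's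
identity `x · ∇f = m f` gives
`Δ(f |x|^q) = |x|^q Δf + q (q + N - 2 + 2m) |x|^{q-2} f`.
The last term vanishes at the Kelvin exponent `q = 2 - N - 2m = -(N + α)`, so `f |x|^q` solves the
same equation as `f`.
-/

open Module
open scoped InnerProductSpace Laplacian Topology

section SecondDerivative

variable {𝕜 E : Type*} [NontriviallyNormedField 𝕜] [NormedAddCommGroup E] [NormedSpace 𝕜 E]
  {f g : E → 𝕜} {x : E}

lemma differentiableAt_fderiv_of_contDiffAt_two {F : Type*} [NormedAddCommGroup F]
    [NormedSpace 𝕜 F] {h : E → F} (hh : ContDiffAt 𝕜 2 h x) : DifferentiableAt 𝕜 (fderiv 𝕜 h) x :=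
  (hh.fderiv_right (m := 1) le_rfl).differentiableAt one_ne_zero

lemma fderiv_fderiv_mul_apply (hf : ContDiffAt 𝕜 2 f x) (hg : ContDiffAt 𝕜 2 g x) (v w : E) :
    fderiv 𝕜 (fderiv 𝕜 fun y => f y * g y) x v w =
      f x * fderiv 𝕜 (fderiv 𝕜 g) x v w + g x * fderiv 𝕜 (fderiv 𝕜 f) x v w +
        (fderiv 𝕜 f x v * fderiv 𝕜 g x w + fderiv 𝕜 g x v * fderiv 𝕜 f x w) := by
  have hfderiv : fderiv 𝕜 (fun y => f y * g y) =ᶠ[𝓝 x]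
      fun y => f y • fderiv 𝕜 g y + g y • fderiv 𝕜 f y := by
    filter_upwards [hf.eventually (by simp), hg.eventually (by simp)] with y hfy hgy
    exact fderiv_fun_mul (hfy.differentiableAt two_ne_zero) (hgy.differentiableAt two_ne_zero)
  have hf₁ := hf.differentiableAt two_ne_zero
  have hg₁ := hg.differentiableAt two_ne_zero
  have hf₂ := differentiableAt_fderiv_of_contDiffAt_two hf
  have hg₂ := differentiableAt_fderiv_of_contDiffAt_two hg
  rw [hfderiv.fderiv_eq, fderiv_fun_add (hf₁.fun_smul hg₂) (hg₁.fun_smul hf₂),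
    fderiv_fun_smul hf₁ hg₂, fderiv_fun_smul hg₁ hf₂]
  simp only [add_apply, smul_apply, ContinuousLinearMap.smulRight_apply, smul_eq_mul]
  ring

lemma fderiv_fderiv_comp_apply {φ : 𝕜 → 𝕜} (hφ : ContDiffAt 𝕜 2 φ (f x))
    (hf : ContDiffAt 𝕜 2 f x) (v w : E) :
    fderiv 𝕜 (fderiv 𝕜 fun y => φ (f y)) x v w =
      deriv φ (f x) * fderiv 𝕜 (fderiv 𝕜 f) x v w +
        deriv (deriv φ) (f x) * (fderiv 𝕜 f x v * fderiv 𝕜 f x w) := by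
  have hfderiv : fderiv 𝕜 (fun y => φ (f y)) =ᶠ[𝓝 x] fun y => deriv φ (f y) • fderiv 𝕜 f y := by
    filter_upwards [hf.continuousAt.eventually (hφ.eventually (by simp)),
      hf.eventually (by simp)] with y hφy hfy
    exact ((hφy.differentiableAt two_ne_zero).hasDerivAt.comp_hasFDerivAt y
      (hfy.differentiableAt two_ne_zero).hasFDerivAt).fderiv
  have hf₁ := hf.differentiableAt two_ne_zero
  have hf₂ := differentiableAt_fderiv_of_contDiffAt_two hf
  have hφ₂ : DifferentiableAt 𝕜 (deriv φ) (f x) :=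
    (differentiableAt_fderiv_of_contDiffAt_two hφ).clm_apply (differentiableAt_const 1)
  have hφf : HasFDerivAt (fun y => deriv φ (f y)) (deriv (deriv φ) (f x) • fderiv 𝕜 f x) x :=
    hφ₂.hasDerivAt.comp_hasFDerivAt x hf₁.hasFDerivAt
  rw [hfderiv.fderiv_eq, fderiv_fun_smul hφf.differentiableAt hf₂, hφf.fderiv]
  simp only [add_apply, smul_apply, ContinuousLinearMap.smulRight_apply, smul_eq_mul, mul_assoc]

end SecondDerivative

lemma fderiv_apply_self_of_homogeneous {E F : Type*} [NormedAddCommGroup E] [NormedSpace ℝ E]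
    [NormedAddCommGroup F] [NormedSpace ℝ F] {f : E → F} {x : E} {m : ℝ}
    (hf : DifferentiableAt ℝ f x) (hom : ∀ᶠ t : ℝ in 𝓝 1, f (t • x) = t ^ m • f x) :
    fderiv ℝ f x x = m • f x := by
  have hray : HasDerivAt (fun t : ℝ => f (t • x)) (fderiv ℝ f x x) 1 := by
    have hsmul : HasDerivAt (fun t : ℝ => t • x) x 1 := by
      simpa using (hasDerivAt_id (1 : ℝ)).smul_const x
    exact hf.hasFDerivAt.comp_hasDerivAt_of_eq 1 hsmul (one_smul ℝ x).symm
  have hpow : HasDerivAt (fun t : ℝ => t ^ m • f x) (m • f x) 1 := by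
    simpa using (Real.hasDerivAt_rpow_const (p := m) (Or.inl one_ne_zero)).smul_const (f x)
  exact hray.unique (hpow.congr_of_eventuallyEq hom)

lemma norm_rpow_eq_norm_sq_rpow {E : Type*} [SeminormedAddGroup E] (x : E) (q : ℝ) :
    ‖x‖ ^ q = (‖x‖ ^ 2) ^ (q / 2) := by
  rw [Real.rpow_div_two_eq_sqrt q (sq_nonneg _), Real.sqrt_sq (norm_nonneg x)]

section Laplacian

-- `HasFDerivAt f (innerSL ℝ w) x` says that `f` has gradient `w` at `x`; Mathlib's `HasGradientAt`
-- would require a separate `CompleteSpace E` instance.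
variable {E : Type*} [NormedAddCommGroup E] [InnerProductSpace ℝ E]

lemma hasFDerivAt_norm_sq_innerSL (x : E) :
    HasFDerivAt (fun y : E => ‖y‖ ^ 2) (innerSL ℝ ((2 : ℝ) • x)) x := by
  simpa [two_smul] using (hasStrictFDerivAt_norm_sq x).hasFDerivAt

lemma hasFDerivAt_norm_rpow_of_ne_zero {x : E} (hx : x ≠ 0) (q : ℝ) :
    HasFDerivAt (fun y : E => ‖y‖ ^ q) (innerSL ℝ ((q * ‖x‖ ^ (q - 2)) • x)) x := by
  have hpow := (hasFDerivAt_norm_sq_innerSL x).rpow_const (p := q / 2)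
    (Or.inl (by positivity))
  simp only [norm_rpow_eq_norm_sq_rpow _ q, norm_rpow_eq_norm_sq_rpow _ (q - 2)]
  convert hpow using 1
  rw [map_smul, map_smul, smul_smul, sub_div, div_self two_ne_zero]
  congr 1
  ring

variable [FiniteDimensional ℝ E] {f g : E → ℝ} {x w : E}

lemma laplacian_eq_sum_fderiv_fderiv {ι : Type*} [Fintype ι] (b : OrthonormalBasis ι ℝ E) :
    Δ f x = ∑ i, fderiv ℝ (fderiv ℝ f) x (b i) (b i) := by
  simp [InnerProductSpace.laplacian_eq_iteratedFDeriv_orthonormalBasis f b,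
    iteratedFDeriv_two_apply]

lemma laplacian_mul (hf : ContDiffAt ℝ 2 f x) (hg : ContDiffAt ℝ 2 g x)
    (hgw : HasFDerivAt g (innerSL ℝ w) x) :
    Δ (fun y => f y * g y) x = f x * Δ g x + g x * Δ f x + 2 * fderiv ℝ f x w := by
  let b := stdOrthonormalBasis ℝ E
  have hcross : ∑ i, fderiv ℝ f x (b i) * fderiv ℝ g x (b i) = fderiv ℝ f x w := by
    conv_rhs => rw [← b.sum_repr' w]
    simp [hgw.fderiv, real_inner_comm, mul_comm]
  simp only [laplacian_eq_sum_fderiv_fderiv b, fderiv_fderiv_mul_apply hf hg, ← hcross,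
    Finset.sum_add_distrib, ← Finset.mul_sum, mul_comm (fderiv ℝ g x _)]
  ring

lemma laplacian_comp {φ : ℝ → ℝ} (hφ : ContDiffAt ℝ 2 φ (f x)) (hf : ContDiffAt ℝ 2 f x)
    (hfw : HasFDerivAt f (innerSL ℝ w) x) :
    Δ (fun y => φ (f y)) x = deriv φ (f x) * Δ f x + deriv (deriv φ) (f x) * ‖w‖ ^ 2 := by
  let b := stdOrthonormalBasis ℝ E
  have hnorm : ∑ i, fderiv ℝ f x (b i) * fderiv ℝ f x (b i) = ‖w‖ ^ 2 := by
    simp [hfw.fderiv, ← b.sum_sq_norm_inner_left w, sq]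
  simp only [laplacian_eq_sum_fderiv_fderiv b, fderiv_fderiv_comp_apply hφ hf, ← hnorm,
    Finset.sum_add_distrib, ← Finset.mul_sum]

lemma laplacian_rpow_const (hf : ContDiffAt ℝ 2 f x) (hfw : HasFDerivAt f (innerSL ℝ w) x)
    (hfx : f x ≠ 0) (p : ℝ) :
    Δ (fun y => f y ^ p) x =
      p * f x ^ (p - 1) * Δ f x + p * (p - 1) * f x ^ (p - 2) * ‖w‖ ^ 2 := by
  rw [laplacian_comp (φ := (· ^ p)) (Real.contDiffAt_rpow_const_of_ne hfx) hf hfw]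
  simp only [Real.deriv_rpow_const', deriv_const_mul_field, sub_sub, one_add_one_eq_two, mul_assoc]

lemma laplacian_inner_right (v : E) : Δ (fun y => ⟪v, y⟫_ℝ) x = 0 := by
  have hfderiv : fderiv ℝ (fun y => ⟪v, y⟫_ℝ) = fun _ => innerSL ℝ v :=
    funext fun y => (innerSL ℝ v).fderiv
  simp [laplacian_eq_sum_fderiv_fderiv (stdOrthonormalBasis ℝ E), hfderiv]

lemma laplacian_norm_sq : Δ (fun y : E => ‖y‖ ^ 2) x = 2 * finrank ℝ E := by
  have hhessian (v : E) : fderiv ℝ (fderiv ℝ fun y : E => ‖y‖ ^ 2) x v v = 2 * ‖v‖ ^ 2 := by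
    have hfderiv : HasFDerivAt (fderiv ℝ fun y : E => ‖y‖ ^ 2) (2 • innerSL ℝ) x := by
      rw [fderiv_norm_sq]
      exact (2 • innerSL ℝ (E := E)).hasFDerivAt
    rw [hfderiv.fderiv, two_smul, two_mul, ← real_inner_self_eq_norm_sq]
    rfl
  simp [laplacian_eq_sum_fderiv_fderiv (stdOrthonormalBasis ℝ E), hhessian, mul_comm]

lemma laplacian_norm_rpow (hx : x ≠ 0) (q : ℝ) :
    Δ (fun y : E => ‖y‖ ^ q) x = q * (q + finrank ℝ E - 2) * ‖x‖ ^ (q - 2) := by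
  have hnorm_sq : ‖x‖ ^ 2 ≠ 0 := by positivity
  simp only [norm_rpow_eq_norm_sq_rpow _ q, norm_rpow_eq_norm_sq_rpow _ (q - 2)]
  rw [laplacian_rpow_const (contDiff_norm_sq ℝ).contDiffAt
      (hasFDerivAt_norm_sq_innerSL x) hnorm_sq, laplacian_norm_sq, norm_smul, mul_pow, sub_div,
    div_self two_ne_zero, show q / 2 - 1 = q / 2 - 2 + 1 by ring, Real.rpow_add_one hnorm_sq,
    Real.norm_ofNat]
  ring

lemma laplacian_mul_norm_rpow_of_homogeneous {m : ℝ} (hf : ContDiffAt ℝ 2 f x)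
    (hom : ∀ᶠ t : ℝ in 𝓝 1, f (t • x) = t ^ m * f x) (hx : x ≠ 0) (q : ℝ) :
    Δ (fun y => f y * ‖y‖ ^ q) x =
      ‖x‖ ^ q * Δ f x + q * (q + finrank ℝ E - 2 + 2 * m) * ‖x‖ ^ (q - 2) * f x := by
  have heuler : fderiv ℝ f x x = m * f x :=
    fderiv_apply_self_of_homogeneous (hf.differentiableAt two_ne_zero) hom
  rw [laplacian_mul hf ((contDiffAt_norm ℝ hx).rpow_const_of_ne (norm_ne_zero_iff.2 hx))
    (hasFDerivAt_norm_rpow_of_ne_zero hx q), laplacian_norm_rpow hx, map_smul, heuler, smul_eq_mul]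
  ring

lemma laplacian_mul_norm_rpow_kelvin {m : ℝ} (hf : ContDiffAt ℝ 2 f x)
    (hom : ∀ᶠ t : ℝ in 𝓝 1, f (t • x) = t ^ m * f x) (hx : x ≠ 0) :
    Δ (fun y => f y * ‖y‖ ^ (2 - finrank ℝ E - 2 * m)) x =
      ‖x‖ ^ (2 - finrank ℝ E - 2 * m) * Δ f x := by
  rw [laplacian_mul_norm_rpow_of_homogeneous hf hom hx]
  ring

end Laplacian

section Hardy

variable {E : Type*} [NormedAddCommGroup E] [InnerProductSpace ℝ E] {e v x : E}

lemma right_ne_zero_of_inner_ne_zero (hex : ⟪e, x⟫_ℝ ≠ 0) : x ≠ 0 := by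
  rintro rfl
  exact hex (inner_zero_right e)

lemma contDiffAt_inner_rpow {n : WithTop ℕ∞} (hex : ⟪e, x⟫_ℝ ≠ 0) (a : ℝ) :
    ContDiffAt ℝ n (fun y => ⟪e, y⟫_ℝ ^ a) x :=
  (contDiffAt_const.inner ℝ contDiffAt_id).rpow_const_of_ne hex

lemma contDiffAt_inner_rpow_mul_inner {n : WithTop ℕ∞} (hex : ⟪e, x⟫_ℝ ≠ 0) (a : ℝ) :
    ContDiffAt ℝ n (fun y => ⟪e, y⟫_ℝ ^ a * ⟪v, y⟫_ℝ) x :=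
  (contDiffAt_inner_rpow hex a).mul (contDiffAt_const.inner ℝ contDiffAt_id)

lemma contDiffAt_inner_rpow_mul_inner_mul_norm_rpow {n : WithTop ℕ∞} (hex : ⟪e, x⟫_ℝ ≠ 0)
    (a q : ℝ) : ContDiffAt ℝ n (fun y => ⟪e, y⟫_ℝ ^ a * ⟪v, y⟫_ℝ * ‖y‖ ^ q) x := by
  have hx : x ≠ 0 := right_ne_zero_of_inner_ne_zero hex
  exact (contDiffAt_inner_rpow_mul_inner hex a).mul
    ((contDiffAt_norm ℝ hx).rpow_const_of_ne (norm_ne_zero_iff.2 hx))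

lemma inner_rpow_mul_inner_homogeneous (hex : 0 ≤ ⟪e, x⟫_ℝ) (a : ℝ) {t : ℝ} (ht : 0 < t) :
    ⟪e, t • x⟫_ℝ ^ a * ⟪v, t • x⟫_ℝ = t ^ (a + 1) * (⟪e, x⟫_ℝ ^ a * ⟪v, x⟫_ℝ) := by
  rw [real_inner_smul_right, real_inner_smul_right, Real.mul_rpow ht.le hex,
    Real.rpow_add_one ht.ne']
  ring

variable [FiniteDimensional ℝ E]

lemma laplacian_inner_rpow_mul_inner (hev : ⟪e, v⟫_ℝ = 0) (hex : ⟪e, x⟫_ℝ ≠ 0) (a : ℝ) :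
    Δ (fun y => ⟪e, y⟫_ℝ ^ a * ⟪v, y⟫_ℝ) x =
      a * (a - 1) * ‖e‖ ^ 2 / ⟪e, x⟫_ℝ ^ 2 * (⟪e, x⟫_ℝ ^ a * ⟪v, x⟫_ℝ) := by
  have hinner (u : E) : HasFDerivAt (fun y => ⟪u, y⟫_ℝ) (innerSL ℝ u) x :=
    (innerSL ℝ u).hasFDerivAt
  have hinner_smooth (u : E) : ContDiffAt ℝ 2 (fun y => ⟪u, y⟫_ℝ) x :=
    (innerSL ℝ u).contDiff.contDiffAt
  have hcross : fderiv ℝ (fun y => ⟪e, y⟫_ℝ ^ a) x v = 0 := by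
    simp [((hinner e).rpow_const (Or.inl hex)).fderiv, hev]
  rw [laplacian_mul (contDiffAt_inner_rpow hex a) (hinner_smooth v) (hinner v), hcross,
    laplacian_rpow_const (hinner_smooth e) (hinner e) hex, laplacian_inner_right,
    laplacian_inner_right, show ⟪e, x⟫_ℝ ^ (a - 2) = ⟪e, x⟫_ℝ ^ a / ⟪e, x⟫_ℝ ^ 2 from
      mod_cast Real.rpow_sub_natCast hex a 2]
  ring

theorem hardy_second_eigen_singular_solution_general (he : ‖e‖ = 1) (hev : ⟪e, v⟫_ℝ = 0)
    {κ α : ℝ} (hκ : κ = α / 2 * (1 - α / 2)) (hex : 0 < ⟪e, x⟫_ℝ) :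
    -Δ (fun y => ⟪e, y⟫_ℝ ^ (α / 2) * ⟪v, y⟫_ℝ * ‖y‖ ^ (-(finrank ℝ E + α))) x -
      κ / ⟪e, x⟫_ℝ ^ 2 *
        (⟪e, x⟫_ℝ ^ (α / 2) * ⟪v, x⟫_ℝ * ‖x‖ ^ (-(finrank ℝ E + α))) = 0 := by
  have hx : x ≠ 0 := right_ne_zero_of_inner_ne_zero hex.ne'
  have hom : ∀ᶠ t : ℝ in 𝓝 1, ⟪e, t • x⟫_ℝ ^ (α / 2) * ⟪v, t • x⟫_ℝ =
      t ^ (α / 2 + 1) * (⟪e, x⟫_ℝ ^ (α / 2) * ⟪v, x⟫_ℝ) := by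
    filter_upwards [lt_mem_nhds one_pos] with t ht
    exact inner_rpow_mul_inner_homogeneous hex.le _ ht
  have hexponent : -(finrank ℝ E + α) = 2 - finrank ℝ E - 2 * (α / 2 + 1) := by ring
  rw [hexponent,
    laplacian_mul_norm_rpow_kelvin (contDiffAt_inner_rpow_mul_inner hex.ne' _) hom hx,
    laplacian_inner_rpow_mul_inner hev hex.ne', he, hκ]
  ring

end Hardy

lemma lap_eq_laplacian {N : ℕ} {u : EuclideanSpace ℝ (Fin N) → ℝ} {x : EuclideanSpace ℝ (Fin N)}
    (hu : ContDiffAt ℝ 2 u x) : lap u x = Δ u x := by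
  simp [lap, laplacian_eq_sum_fderiv_fderiv (EuclideanSpace.basisFun (Fin N) ℝ),
    fderiv_clm_apply (differentiableAt_fderiv_of_contDiffAt_two hu) (differentiableAt_const _)]

lemma inner_single_one_left {ι : Type*} [Fintype ι] [DecidableEq ι] (i : ι)
    (y : EuclideanSpace ℝ ι) : ⟪EuclideanSpace.single i (1 : ℝ), y⟫_ℝ = y i := by
  simp [EuclideanSpace.inner_single_left]

lemma eq_half_mul_one_sub_half_of_eq_one_add_sqrt {κ α : ℝ} (hκ : κ ≤ 1 / 4)
    (hα : α = 1 + √(1 - 4 * κ)) : κ = α / 2 * (1 - α / 2) := by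
  have hsq : √(1 - 4 * κ) ^ 2 = 1 - 4 * κ := Real.sq_sqrt (by linarith)
  rw [hα]
  linear_combination (1 / 4) * hsq

/-- for `κ ∈ (0,1/4]`, `α₊ = 1 + √(1-4κ)`, and a tangential index `j`
(`j < N-1`), the singular companion `u(x) = x_N^{α₊/2} x_j |x|^{-(N+α₊)}` satisfies
`-Δu - κ x_N⁻² u = 0` on `H \ {0}`, where `H = {x : x_N > 0}`. -/
theorem hardy_second_eigen_singular_solution (N : ℕ) (hN : 2 ≤ N) (κ : ℝ)
    (hκ0 : 0 < κ) (hκ4 : κ ≤ 1/4) (α : ℝ) (hα : α = 1 + Real.sqrt (1 - 4*κ))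
    (j : Fin N) (hj : (j : ℕ) < N - 1) :
    let n : Fin N := ⟨N - 1, by omega⟩
    let u : EuclideanSpace ℝ (Fin N) → ℝ :=
      fun x => (x n) ^ (α/2) * x j * ‖x‖ ^ (-((N : ℝ) + α))
    ∀ x : EuclideanSpace ℝ (Fin N), 0 < x n → x ≠ 0 →
      -lap u x - κ / (x n)^2 * u x = 0 := by
  intro n u x hx _
  have hnj : n ≠ j := fun h => hj.ne (congrArg Fin.val h).symm
  have hnx : 0 < ⟪EuclideanSpace.single n (1 : ℝ), x⟫_ℝ := by rwa [inner_single_one_left]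
  have hu : ContDiffAt ℝ 2 u x := by
    simpa only [inner_single_one_left] using contDiffAt_inner_rpow_mul_inner_mul_norm_rpow
      (v := EuclideanSpace.single j 1) hnx.ne' (α / 2) (-(N + α))
  rw [lap_eq_laplacian hu]
  simpa only [inner_single_one_left, finrank_euclideanSpace_fin] using
    hardy_second_eigen_singular_solution_general (v := EuclideanSpace.single j 1) (by simp)
      (by simp [inner_single_one_left, hnj]) (eq_half_mul_one_sub_half_of_eq_one_add_sqrt hκ4 hα)
      hnx
end

section
/- Let N ≥ 2 be an integer, κ ∈ (0, 1/4], α₊ = 1 + √(1−4κ), and μ_{κ,1} = (α₊/2)(N + α₊/2 − 2). Then for every smooth function w with compact support in the open interval (0, π/2), ∫₀^{π/2} w'(θ)² (sin θ)^{N−2} dθ ≥ κ ∫₀^{π/2} w(θ)² (cos θ)^{−2} (sin θ)^{N−2} dθ + μ_{κ,1} ∫₀^{π/2} w(θ)² (sin θ)^{N−2} dθ. (This is the zonal Hardy–Poincaré inequality expressing that μ_{κ,1} is the bottom of the spectrum of the spherical Hardy operator on the upper half-sphere.) -/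
open Real MeasureTheory

/-!
The function `φ = cos ^ a` with `a = α / 2` is a positive solution of `L'_κ φ = μ φ`, so its
logarithmic derivative `g = -a tan` solves the Riccati equation
`(p g)' + p g² = -(κ / cos² + μ) p` with weight `p = sin ^ (N - 2)`.
Expanding `0 ≤ ∫ p (w' - g w)²` and integrating the cross term `2 p g w w' = p g (w²)'` by parts
gives `∫ p w'² ≥ -∫ ((p g)' + p g²) w²`, which is the claim.
-/

section CompactSupport

variable {X : Type*} [TopologicalSpace X]

theorem tsupport_pow_subset {M : Type*} [MonoidWithZero M] (u : X → M) {n : ℕ}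
    (hn : n ≠ 0) : tsupport (fun x => u x ^ n) ⊆ tsupport u :=
  tsupport_comp_subset (g := (· ^ n)) (zero_pow hn) u

theorem hasCompactSupport_pow {M : Type*} [MonoidWithZero M] {u : X → M} {n : ℕ}
    (hn : n ≠ 0) (hu : HasCompactSupport u) : HasCompactSupport fun x => u x ^ n :=
  hu.comp_left (g := (· ^ n)) (zero_pow hn)

variable [MeasurableSpace X] [OpensMeasurableSpace X] {ν : Measure X}
  [IsFiniteMeasureOnCompacts ν] {A : Type*} [NormedRing A] {U : Set X} {f u : X → A}

theorem integrable_mul_of_continuousOn_of_tsupport_subset (hf : ContinuousOn f U)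
    (hu : Continuous u) (huc : HasCompactSupport u) (huU : tsupport u ⊆ U) :
    Integrable (fun x => f x * u x) ν := by
  have hfu : ContinuousOn (fun x => f x * u x) (tsupport u) := (hf.mono huU).mul hu.continuousOn
  have hsupp : Function.support (fun x => f x * u x) ⊆ tsupport u :=
    (Function.support_mul_subset_right f u).trans (subset_tsupport u)
  exact (integrableOn_iff_integrable_of_support_subset hsupp).1
    (hfu.integrableOn_compact' huc (isClosed_tsupport u).measurableSet)

theorem integrable_mul_pow_of_continuousOn_of_tsupport_subset {n : ℕ} (hn : n ≠ 0)
    (hf : ContinuousOn f U) (hu : Continuous u) (huc : HasCompactSupport u)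
    (huU : tsupport u ⊆ U) : Integrable (fun x => f x * u x ^ n) ν :=
  integrable_mul_of_continuousOn_of_tsupport_subset hf (hu.pow n) (hasCompactSupport_pow hn huc)
    ((tsupport_pow_subset u hn).trans huU)

end CompactSupport

section Riccati

theorem mul_sq_le_of_riccati {p g F' V w w' : ℝ} (hp : 0 ≤ p) (hV : F' + p * g ^ 2 ≤ -V) :
    V * w ^ 2 ≤ p * w' ^ 2 - (p * g * (2 * w * w') + F' * w ^ 2) := by
  have hsq : 0 ≤ p * (w' - g * w) ^ 2 := mul_nonneg hp (sq_nonneg _)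
  have hVw : (F' + p * g ^ 2) * w ^ 2 ≤ -V * w ^ 2 := mul_le_mul_of_nonneg_right hV (sq_nonneg w)
  linarith

variable {U : Set ℝ} {p g F F' V u w : ℝ → ℝ}

theorem integrable_mul_deriv_of_continuousOn_of_tsupport_subset (hF : ContinuousOn F U)
    (hu : ContDiff ℝ 1 u) (huc : HasCompactSupport u) (huU : tsupport u ⊆ U) :
    Integrable fun x => F x * deriv u x :=
  integrable_mul_of_continuousOn_of_tsupport_subset hF (hu.continuous_deriv le_rfl) huc.deriv
    (tsupport_deriv_subset.trans huU)

theorem setIntegral_mul_deriv_eq_neg_of_tsupport_subset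
    (hF : ∀ x ∈ U, HasDerivAt F (F' x) x) (hF' : ContinuousOn F' U)
    (hu : ContDiff ℝ 1 u) (huc : HasCompactSupport u) (huU : tsupport u ⊆ U) :
    ∫ x in U, F x * deriv u x = -∫ x in U, F' x * u x := by
  have hFc : ContinuousOn F U := HasDerivAt.continuousOn hF
  have hu_zero {x : ℝ} (hx : x ∉ U) : u x = 0 :=
    image_eq_zero_of_notMem_tsupport fun h => hx (huU h)
  have hu'_zero {x : ℝ} (hx : x ∉ U) : deriv u x = 0 :=
    deriv_of_notMem_tsupport fun h => hx (huU h)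
  rw [setIntegral_eq_integral_of_forall_compl_eq_zero fun x hx => by rw [hu'_zero hx, mul_zero],
    setIntegral_eq_integral_of_forall_compl_eq_zero fun x hx => by rw [hu_zero hx, mul_zero]]
  exact integral_mul_deriv_eq_deriv_mul_of_integrable (fun x hx => hF x (huU hx))
    (fun x _ => (hu.differentiable one_ne_zero x).hasDerivAt)
    (integrable_mul_deriv_of_continuousOn_of_tsupport_subset hFc hu huc huU)
    (integrable_mul_of_continuousOn_of_tsupport_subset hF' hu.continuous huc huU)
    (integrable_mul_of_continuousOn_of_tsupport_subset hFc hu.continuous huc huU)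

theorem setIntegral_mul_sq_le_of_riccati (hU : MeasurableSet U)
    (hp : ∀ x ∈ U, 0 ≤ p x) (hpc : ContinuousOn p U)
    (hpg : ∀ x ∈ U, HasDerivAt (fun y => p y * g y) (F' x) x) (hF' : ContinuousOn F' U)
    (hVc : ContinuousOn V U) (hV : ∀ x ∈ U, F' x + p x * g x ^ 2 ≤ -V x)
    (hw : ContDiff ℝ 1 w) (hwc : HasCompactSupport w) (hwU : tsupport w ⊆ U) :
    ∫ x in U, V x * w x ^ 2 ≤ ∫ x in U, p x * deriv w x ^ 2 := by
  have hsq_diff : ContDiff ℝ 1 fun x => w x ^ 2 := hw.pow 2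
  have hsqc : HasCompactSupport fun x => w x ^ 2 :=
    hasCompactSupport_pow two_ne_zero hwc
  have hsqU : tsupport (fun x => w x ^ 2) ⊆ U :=
    (tsupport_pow_subset w two_ne_zero).trans hwU
  have hsq_deriv (x : ℝ) : deriv (fun y => w y ^ 2) x = 2 * w x * deriv w x := by
    simpa using deriv_fun_pow (hw.differentiable one_ne_zero x) 2
  have hpw' : Integrable fun x => p x * deriv w x ^ 2 :=
    integrable_mul_pow_of_continuousOn_of_tsupport_subset two_ne_zero hpc
      (hw.continuous_deriv le_rfl) hwc.deriv (tsupport_deriv_subset.trans hwU)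
  have hVw : Integrable fun x => V x * w x ^ 2 :=
    integrable_mul_pow_of_continuousOn_of_tsupport_subset two_ne_zero hVc hw.continuous hwc hwU
  have hF'w : Integrable fun x => F' x * w x ^ 2 :=
    integrable_mul_pow_of_continuousOn_of_tsupport_subset two_ne_zero hF' hw.continuous hwc hwU
  have hFw' : Integrable fun x => p x * g x * deriv (fun y => w y ^ 2) x :=
    integrable_mul_deriv_of_continuousOn_of_tsupport_subset (HasDerivAt.continuousOn hpg)
      hsq_diff hsqc hsqU
  have hparts := setIntegral_mul_deriv_eq_neg_of_tsupport_subset hpg hF' hsq_diff hsqc hsqU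
  calc ∫ x in U, V x * w x ^ 2
      ≤ ∫ x in U, (p x * deriv w x ^ 2
          - (p x * g x * deriv (fun y => w y ^ 2) x + F' x * w x ^ 2)) := by
        refine setIntegral_mono_on hVw.integrableOn
          (hpw'.sub (hFw'.fun_add hF'w)).integrableOn hU fun x hx => ?_
        rw [hsq_deriv]
        exact mul_sq_le_of_riccati (hp x hx) (hV x hx)
    _ = ∫ x in U, p x * deriv w x ^ 2 := by
        rw [integral_sub hpw'.integrableOn (hFw'.fun_add hF'w).integrableOn,
          integral_add hFw'.integrableOn hF'w.integrableOn, hparts, neg_add_cancel, sub_zero]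

end Riccati

section Trigonometry

variable {U : Set ℝ} {θ : ℝ}

theorem continuousOn_sin_rpow (s : ℝ) (hsin : ∀ θ ∈ U, sin θ ≠ 0) :
    ContinuousOn (fun θ => sin θ ^ s) U :=
  continuousOn_sin.rpow_const fun θ hθ => .inl (hsin θ hθ)

theorem continuousOn_sin_rpow_div_cos_sq (s : ℝ) (hsin : ∀ θ ∈ U, sin θ ≠ 0)
    (hcos : ∀ θ ∈ U, cos θ ≠ 0) : ContinuousOn (fun θ => sin θ ^ s / cos θ ^ 2) U :=
  (continuousOn_sin_rpow s hsin).div (continuousOn_cos.pow 2) fun θ hθ =>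
    pow_ne_zero 2 (hcos θ hθ)

theorem hasDerivAt_sin_rpow_mul_tan (s : ℝ) (hsin : sin θ ≠ 0) (hcos : cos θ ≠ 0) :
    HasDerivAt (fun x => sin x ^ s * tan x) (s * sin θ ^ s + sin θ ^ s / cos θ ^ 2) θ := by
  refine (((hasDerivAt_sin θ).rpow_const (p := s) (.inl hsin)).mul
    (hasDerivAt_tan hcos)).congr_deriv ?_
  rw [rpow_sub_one hsin, tan_eq_sin_div_cos]
  field_simp

theorem riccati_neg_mul_tan (a s q : ℝ) (hcos : cos θ ≠ 0) :
    -a * (s * q + q / cos θ ^ 2) + q * (-a * tan θ) ^ 2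
      = -(a * (1 - a) * (q / cos θ ^ 2) + a * (s + a) * q) := by
  have htan : tan θ ^ 2 = 1 / cos θ ^ 2 - 1 := by
    rw [← inv_one_add_tan_sq hcos, one_div, inv_inv, add_sub_cancel_left]
  rw [mul_pow, htan]
  ring

theorem setIntegral_sin_rpow_mul_sq_le (a s : ℝ) (hU : MeasurableSet U)
    (hsin : ∀ θ ∈ U, 0 < sin θ) (hcos : ∀ θ ∈ U, cos θ ≠ 0) {w : ℝ → ℝ} (hw : ContDiff ℝ 1 w)
    (hwc : HasCompactSupport w) (hwU : tsupport w ⊆ U) :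
    ∫ θ in U, (a * (1 - a) * (sin θ ^ s / cos θ ^ 2) + a * (s + a) * sin θ ^ s) * w θ ^ 2
      ≤ ∫ θ in U, sin θ ^ s * deriv w θ ^ 2 := by
  have hp := continuousOn_sin_rpow s fun θ hθ => (hsin θ hθ).ne'
  have hq := continuousOn_sin_rpow_div_cos_sq s (fun θ hθ => (hsin θ hθ).ne') hcos
  have hderiv : ∀ θ ∈ U, HasDerivAt (fun x => sin x ^ s * (-a * tan x))
      (-a * (s * sin θ ^ s + sin θ ^ s / cos θ ^ 2)) θ := fun θ hθ => by
    simpa only [mul_left_comm] using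
      (hasDerivAt_sin_rpow_mul_tan s (hsin θ hθ).ne' (hcos θ hθ)).const_mul (-a)
  exact setIntegral_mul_sq_le_of_riccati hU (fun θ hθ => (rpow_pos_of_pos (hsin θ hθ) s).le)
    hp hderiv (((hp.const_mul s).add hq).const_mul (-a))
    ((hq.const_mul (a * (1 - a))).add (hp.const_mul (a * (s + a))))
    (fun θ hθ => (riccati_neg_mul_tan a s _ (hcos θ hθ)).le) hw hwc hwU

end Trigonometry

theorem zonal_hardy_poincare_general (a s : ℝ) {w : ℝ → ℝ} (hw : ContDiff ℝ 1 w)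
    (hwc : HasCompactSupport w) (hws : tsupport w ⊆ Set.Ioo 0 (π / 2)) :
    a * (1 - a) * (∫ θ in Set.Ioo 0 (π / 2), w θ ^ 2 / cos θ ^ 2 * sin θ ^ s)
        + a * (s + a) * (∫ θ in Set.Ioo 0 (π / 2), w θ ^ 2 * sin θ ^ s)
      ≤ ∫ θ in Set.Ioo 0 (π / 2), deriv w θ ^ 2 * sin θ ^ s := by
  have hsin (θ : ℝ) (hθ : θ ∈ Set.Ioo 0 (π / 2)) : 0 < sin θ :=
    sin_pos_of_pos_of_lt_pi hθ.1 (hθ.2.trans (half_lt_self pi_pos))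
  have hcos (θ : ℝ) (hθ : θ ∈ Set.Ioo 0 (π / 2)) : cos θ ≠ 0 :=
    (cos_pos_of_mem_Ioo ⟨(neg_neg_of_pos pi_div_two_pos).trans hθ.1, hθ.2⟩).ne'
  have hp := continuousOn_sin_rpow s fun θ hθ => (hsin θ hθ).ne'
  have hq := continuousOn_sin_rpow_div_cos_sq s (fun θ hθ => (hsin θ hθ).ne') hcos
  have hint {f : ℝ → ℝ} (hf : ContinuousOn f (Set.Ioo 0 (π / 2))) :
      IntegrableOn (fun θ => f θ * w θ ^ 2) (Set.Ioo 0 (π / 2)) :=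
    (integrable_mul_pow_of_continuousOn_of_tsupport_subset two_ne_zero hf hw.continuous hwc
      hws).integrableOn
  calc _ = ∫ θ in Set.Ioo 0 (π / 2),
          (a * (1 - a) * (sin θ ^ s / cos θ ^ 2) + a * (s + a) * sin θ ^ s) * w θ ^ 2 := by
        simp only [add_mul, mul_assoc (_ * _) _ (w _ ^ 2)]
        rw [integral_add ((hint hq).const_mul _) ((hint hp).const_mul _),
          integral_const_mul, integral_const_mul]
        simp only [div_mul_comm (sin _ ^ s), mul_comm (sin _ ^ s)]
    _ ≤ ∫ θ in Set.Ioo 0 (π / 2), sin θ ^ s * deriv w θ ^ 2 :=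
        setIntegral_sin_rpow_mul_sq_le a s measurableSet_Ioo hsin hcos hw hwc hws
    _ = _ := by simp only [mul_comm]

theorem half_mul_one_sub_half_hardy_exponent {κ : ℝ} (hκ : κ ≤ 1 / 4) :
    (1 + √(1 - 4 * κ)) / 2 * (1 - (1 + √(1 - 4 * κ)) / 2) = κ := by
  linarith [sq_sqrt (show 0 ≤ 1 - 4 * κ by linarith)]

/-- zonal Hardy–Poincaré inequality on the upper half-sphere: for
`κ ∈ (0,1/4]`, `α₊ = 1 + √(1-4κ)` and `μ_{κ,1} = (α₊/2)(N + α₊/2 - 2)`, every smooth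
`w` compactly supported in `(0, π/2)` satisfies
`∫ w'² sin^{N-2} ≥ κ ∫ w² cos⁻² sin^{N-2} + μ_{κ,1} ∫ w² sin^{N-2}`. -/
theorem zonal_hardy_poincare (N : ℕ) (hN : 2 ≤ N) (κ : ℝ)
    (hκ0 : 0 < κ) (hκ4 : κ ≤ 1/4) (α : ℝ) (hα : α = 1 + Real.sqrt (1 - 4*κ)) :
    let μ : ℝ := (α/2) * ((N : ℝ) + α/2 - 2)
    ∀ w : ℝ → ℝ, ContDiff ℝ (⊤ : ℕ∞) w → HasCompactSupport w →
      tsupport w ⊆ Set.Ioo 0 (π/2) →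
      (∫ θ in Set.Ioo 0 (π/2), (deriv w θ)^2 * (Real.sin θ)^(N-2))
        ≥ κ * (∫ θ in Set.Ioo 0 (π/2), (w θ)^2 / (Real.cos θ)^2 * (Real.sin θ)^(N-2))
          + μ * (∫ θ in Set.Ioo 0 (π/2), (w θ)^2 * (Real.sin θ)^(N-2)) := by
  intro μ w hw hwc hws
  have hκ : α / 2 * (1 - α / 2) = κ := hα ▸ half_mul_one_sub_half_hardy_exponent hκ4
  have hμ : α / 2 * (((N - 2 : ℕ) : ℝ) + α / 2) = μ := by
    rw [Nat.cast_sub hN, Nat.cast_ofNat, sub_add_eq_add_sub]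
  simpa only [hκ, hμ, rpow_natCast] using
    zonal_hardy_poincare_general (α / 2) (N - 2 : ℕ) (hw.of_le (by simp)) hwc hws
end
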